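/- arXiv:1804.04062 — 2 statements merged into one kernel-verified Lean document; each statement's English description precedes it below -/
import Mathlib

section
/- Let K > 1 and ρ ≥ 1, set K̃ = (K² + 1 + √((K²+1)² − 4ρ(2−ρ)K²))/(2ρK) (so K̃ > 1), and let α = (K̃/(K̃² − 1))·((K² − 1)/K). Then the affine map φ(z) = αz + (1 − ρ) maps the disc D_K bijectively onto the disc D_K̃; in particular the image of D_K under φ equals D_K̃. -/
/-- The open disc `D_κ` with center `(κ²+1)/(κ²−1)` and radius `2κ/(κ²−1)`. -/
noncomputable def discDK (κ : ℝ) : Set ℂ :=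
  Metric.ball (((κ^2 + 1) / (κ^2 - 1) : ℝ) : ℂ) (2 * κ / (κ^2 - 1))

/-!
`z ↦ α z + (1 - ρ)` is a dilation, and `α` is the ratio of the radii of `D_K̃` and `D_K`, so only
the centers have to be matched. They match exactly when `K̃` is a root of the quadratic
`p(X) = ρ K X² - (K² + 1) X + (2 - ρ) K`, and the formula for `K̃` is its larger root. Since
`p(1) = -(K - 1)² < 0`, the discriminant is positive and the larger root exceeds `1`.
-/

theorem bijOn_smul_add_ball {𝕜 E : Type*} [NormedDivisionRing 𝕜] [SeminormedAddCommGroup E]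
    [Module 𝕜 E] [NormSMulClass 𝕜 E] {a : 𝕜} (ha : a ≠ 0) (b c : E) (r : ℝ) :
    Set.BijOn (fun x ↦ a • x + b) (Metric.ball c r) (Metric.ball (a • c + b) (‖a‖ * r)) :=
  (DilationEquiv.smulTorsor b ha).toEquiv.bijOn fun x ↦ by
    change dist (a • x + b) (a • c + b) < ‖a‖ * r ↔ dist x c < r
    rw [dist_add_right, dist_smul₀, mul_lt_mul_iff_right₀ (norm_pos_iff.mpr ha)]

theorem sq_lt_discrim_of_quadratic_neg {R : Type*} [CommRing R] [LinearOrder R]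
    [IsStrictOrderedRing R] {a b c x : R} (ha : 0 < a) (hx : a * (x * x) + b * x + c < 0) :
    (2 * a * x + b) ^ 2 < discrim a b c := by
  have gap : discrim a b c - (2 * a * x + b) ^ 2 = 4 * (a * -(a * (x * x) + b * x + c)) := by
    rw [discrim]; ring
  have gap_pos : 0 < 4 * (a * -(a * (x * x) + b * x + c)) :=
    mul_pos four_pos (mul_pos ha (neg_pos.mpr hx))
  exact sub_pos.mp (gap ▸ gap_pos)

/-- The larger root of the real quadratic `a X² + b X + c`, given by the quadratic formula; it has
this meaning only for `0 < a` and a nonnegative discriminant. -/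
noncomputable def largerRoot (a b c : ℝ) : ℝ :=
  (-b + √(discrim a b c)) / (2 * a)

theorem quadratic_largerRoot_eq_zero {a b c : ℝ} (ha : a ≠ 0) (h : 0 ≤ discrim a b c) :
    a * (largerRoot a b c * largerRoot a b c) + b * largerRoot a b c + c = 0 :=
  (quadratic_eq_zero_iff ha (Real.mul_self_sqrt h).symm _).mpr (.inl rfl)

theorem lt_largerRoot_of_quadratic_neg {a b c x : ℝ} (ha : 0 < a)
    (hx : a * (x * x) + b * x + c < 0) : x < largerRoot a b c := by
  have h : 2 * a * x + b < √(discrim a b c) :=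
    Real.lt_sqrt_of_sq_lt (sq_lt_discrim_of_quadratic_neg ha hx)
  rw [largerRoot, lt_div_iff₀ (by positivity)]
  linarith

/-- The ratio `α` of the radius of `discDK κ` to that of `discDK K`. -/
noncomputable def discScale (K κ : ℝ) : ℝ :=
  κ / (κ ^ 2 - 1) * ((K ^ 2 - 1) / K)

section DiscScale

variable {K κ : ℝ}

theorem discScale_pos (hK : 1 < K) (hκ : 1 < κ) : 0 < discScale K κ := by
  have hK' : 0 < K ^ 2 - 1 := sub_pos.mpr (one_lt_pow₀ hK two_ne_zero)
  have hκ' : 0 < κ ^ 2 - 1 := sub_pos.mpr (one_lt_pow₀ hκ two_ne_zero)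
  unfold discScale
  positivity

theorem discScale_mul_radius (hK : 1 < K) :
    discScale K κ * (2 * K / (K ^ 2 - 1)) = 2 * κ / (κ ^ 2 - 1) := by
  have hK' : K ^ 2 - 1 ≠ 0 := (sub_pos.mpr (one_lt_pow₀ hK two_ne_zero)).ne'
  unfold discScale
  field_simp

theorem discScale_mul_center_add {ρ : ℝ} (hK : 1 < K) (hκ : 1 < κ)
    (h : ρ * K * (κ * κ) + -(K ^ 2 + 1) * κ + (2 - ρ) * K = 0) :
    discScale K κ * ((K ^ 2 + 1) / (K ^ 2 - 1)) + (1 - ρ) = (κ ^ 2 + 1) / (κ ^ 2 - 1) := by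
  have hK' : K ^ 2 - 1 ≠ 0 := (sub_pos.mpr (one_lt_pow₀ hK two_ne_zero)).ne'
  have hκ' : κ ^ 2 - 1 ≠ 0 := (sub_pos.mpr (one_lt_pow₀ hκ two_ne_zero)).ne'
  unfold discScale
  field_simp
  linear_combination -h

theorem bijOn_discScale_mul_add_discDK {b : ℝ} (hK : 1 < K) (hκ : 1 < κ)
    (hb : discScale K κ * ((K ^ 2 + 1) / (K ^ 2 - 1)) + b = (κ ^ 2 + 1) / (κ ^ 2 - 1)) :
    Set.BijOn (fun z : ℂ ↦ (discScale K κ : ℂ) * z + (b : ℂ)) (discDK K) (discDK κ) := by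
  have hα : 0 < discScale K κ := discScale_pos hK hκ
  have h := bijOn_smul_add_ball (Complex.ofReal_ne_zero.mpr hα.ne') (b : ℂ)
    (((K ^ 2 + 1) / (K ^ 2 - 1) : ℝ) : ℂ) (2 * K / (K ^ 2 - 1))
  rwa [Complex.norm_of_nonneg hα.le, discScale_mul_radius hK, smul_eq_mul, ← Complex.ofReal_mul,
    ← Complex.ofReal_add, hb] at h

end DiscScale

theorem affine_bijOn_discDK_general {K ρ Kt α : ℝ} (hK : 1 < K) (hρ : 0 < ρ)
    (hKt : Kt = (K ^ 2 + 1 + √((K ^ 2 + 1) ^ 2 - 4 * ρ * (2 - ρ) * K ^ 2)) / (2 * ρ * K))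
    (hα : α = (Kt / (Kt ^ 2 - 1)) * ((K ^ 2 - 1) / K)) :
    Set.BijOn (fun z : ℂ ↦ (α : ℂ) * z + ((1 - ρ : ℝ) : ℂ)) (discDK K) (discDK Kt) := by
  have hρK : 0 < ρ * K := by positivity
  have neg_at_one : ρ * K * (1 * 1) + -(K ^ 2 + 1) * 1 + (2 - ρ) * K < 0 := by
    linarith [pow_pos (sub_pos.mpr hK) 2]
  have hdiscrim : 0 ≤ discrim (ρ * K) (-(K ^ 2 + 1)) ((2 - ρ) * K) :=
    (sq_nonneg _).trans (sq_lt_discrim_of_quadratic_neg hρK neg_at_one).le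
  have hroot : Kt = largerRoot (ρ * K) (-(K ^ 2 + 1)) ((2 - ρ) * K) := by
    rw [hKt, largerRoot, discrim]; ring_nf
  have one_lt : 1 < Kt := hroot ▸ lt_largerRoot_of_quadratic_neg hρK neg_at_one
  have hquad : ρ * K * (Kt * Kt) + -(K ^ 2 + 1) * Kt + (2 - ρ) * K = 0 :=
    hroot ▸ quadratic_largerRoot_eq_zero hρK.ne' hdiscrim
  rw [show α = discScale K Kt from hα]
  exact bijOn_discScale_mul_add_discDK hK one_lt (discScale_mul_center_add hK one_lt hquad)

/-- For `K > 1`, `ρ ≥ 1`, with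
`K̃ = (K² + 1 + √((K²+1)² − 4ρ(2−ρ)K²))/(2ρK)` (which is `> 1`) and
`α = (K̃/(K̃² − 1))·((K² − 1)/K)`, the affine map `z ↦ αz + (1 − ρ)`
maps `D_K` bijectively onto `D_K̃`; in particular the image of `D_K` equals `D_K̃`. -/
theorem affine_bijOn_discDK (K ρ : ℝ) (hK : 1 < K) (hρ : 1 ≤ ρ)
    (Kt : ℝ) (hKt : Kt = (K^2 + 1 + Real.sqrt ((K^2 + 1)^2 - 4*ρ*(2 - ρ)*K^2)) / (2*ρ*K))
    (α : ℝ) (hα : α = (Kt / (Kt^2 - 1)) * ((K^2 - 1) / K)) :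
    Set.BijOn (fun z : ℂ => (α : ℂ) * z + ((1 - ρ : ℝ) : ℂ)) (discDK K) (discDK Kt) ∧
      (fun z : ℂ => (α : ℂ) * z + ((1 - ρ : ℝ) : ℂ)) '' (discDK K) = discDK Kt := by
  have h := affine_bijOn_discDK_general hK (zero_lt_one.trans_le hρ) hKt hα
  exact ⟨h, h.image_eq⟩
end

section
/- Let K > 1, set K̃ = (K + K⁻¹)/2 and α = 2K̃(K − 1)/((K̃ − 1)(K + 1)). Then α > 0 and the image of the disc D_K under the map z ↦ αz − 1 equals the disc D_K̃. -/
/-!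
Write `K = exp s`. Then `D_K` has center `c = coth s` and radius `r = csch s`, while `K̃ = cosh s`
and `α = 2 * coth s = 2 * c`. Hence `z ↦ α * z - 1` sends the center to `2 * c ^ 2 - 1` and the
radius to `2 * c * r`. These are the center and radius of `D_K̃`, since
`(cosh s ^ 2 + 1) / sinh s ^ 2 = 2 * coth s ^ 2 - 1` and
`2 * cosh s / sinh s ^ 2 = 2 * coth s * csch s`.
-/

open Metric

/-- The center of the disc `discDK κ`, as a real number. -/
noncomputable def discDKCenter (κ : ℝ) : ℝ := (κ ^ 2 + 1) / (κ ^ 2 - 1)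

/-- The radius of the disc `discDK κ`. -/
noncomputable def discDKRadius (κ : ℝ) : ℝ := 2 * κ / (κ ^ 2 - 1)

theorem discDK_eq_ball (κ : ℝ) : discDK κ = ball (discDKCenter κ : ℂ) (discDKRadius κ) := rfl

theorem image_smul_add_const_ball {𝕜 E : Type*} [NormedDivisionRing 𝕜] [SeminormedAddCommGroup E]
    [Module 𝕜 E] [NormSMulClass 𝕜 E] {a : 𝕜} (ha : a ≠ 0) (b x : E) (r : ℝ) :
    (fun z : E => a • z + b) '' ball x r = ball (a • x + b) (‖a‖ * r) :=
  calc (fun z : E => a • z + b) '' ball x r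
      = (IsometryEquiv.addRight b) '' ((a • ·) '' ball x r) := by
        rw [Set.image_image]
        rfl
    _ = (IsometryEquiv.addRight b) '' ball (a • x) (‖a‖ * r) := by
        rw [smul_image_ball ha]
    _ = ball (a • x + b) (‖a‖ * r) := IsometryEquiv.image_ball _ _ _

section HalfAddInv

variable {F : Type*} [Field F]

theorem half_add_inv_eq_div {x : F} (hx : x ≠ 0) : (x + x⁻¹) / 2 = (x ^ 2 + 1) / (2 * x) := by
  field_simp

variable [NeZero (2 : F)] {x : F}

theorem half_add_inv_sub_one (hx : x ≠ 0) : (x + x⁻¹) / 2 - 1 = (x - 1) ^ 2 / (2 * x) := by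
  field_simp
  ring

theorem half_add_inv_sq_sub_one (hx : x ≠ 0) :
    ((x + x⁻¹) / 2) ^ 2 - 1 = ((x ^ 2 - 1) / (2 * x)) ^ 2 := by
  field_simp
  ring

end HalfAddInv

section Disc

variable {K : ℝ}

theorem discDKCenter_half_add_inv (hK : K ≠ 0) (hK_sq : K ^ 2 ≠ 1) :
    discDKCenter ((K + K⁻¹) / 2) = 2 * discDKCenter K ^ 2 - 1 := by
  have hsub : K ^ 2 - 1 ≠ 0 := sub_ne_zero.2 hK_sq
  rw [discDKCenter, discDKCenter, half_add_inv_sq_sub_one hK, half_add_inv_eq_div hK]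
  field_simp
  ring

theorem discDKRadius_half_add_inv (hK : K ≠ 0) :
    discDKRadius ((K + K⁻¹) / 2) = 2 * discDKCenter K * discDKRadius K := by
  rw [discDKRadius, half_add_inv_sq_sub_one hK, half_add_inv_eq_div hK, discDKCenter, discDKRadius]
  field_simp

theorem scale_eq_two_mul_discDKCenter (hK : K ≠ 0) :
    2 * ((K + K⁻¹) / 2) * (K - 1) / (((K + K⁻¹) / 2 - 1) * (K + 1)) = 2 * discDKCenter K := by
  rw [half_add_inv_sub_one hK, half_add_inv_eq_div hK, discDKCenter,
    show K ^ 2 - 1 = (K - 1) * (K + 1) by ring]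
  field_simp

end Disc

/-- For `K > 1`, with `K̃ = (K + K⁻¹)/2` and
`α = 2K̃(K − 1)/((K̃ − 1)(K + 1))`, we have `α > 0` and the image of `D_K` under
`z ↦ αz − 1` equals `D_K̃`. -/
theorem image_discDK_eq (K : ℝ) (hK : 1 < K)
    (Kt : ℝ) (hKt : Kt = (K + K⁻¹) / 2)
    (α : ℝ) (hα : α = 2 * Kt * (K - 1) / ((Kt - 1) * (K + 1))) :
    0 < α ∧ (fun z : ℂ => (α : ℂ) * z - 1) '' discDK K = discDK Kt := by
  subst hKt
  have hK₀ : K ≠ 0 := (one_pos.trans hK).ne'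
  have hK_sq : 1 < K ^ 2 := one_lt_pow₀ hK two_ne_zero
  have hα_center : α = 2 * discDKCenter K := hα.trans (scale_eq_two_mul_discDKCenter hK₀)
  have hα_pos : 0 < α :=
    hα_center ▸ mul_pos two_pos (div_pos (by positivity) (sub_pos.2 hK_sq))
  have hcenter : α * discDKCenter K - 1 = discDKCenter ((K + K⁻¹) / 2) := by
    rw [discDKCenter_half_add_inv hK₀ hK_sq.ne', hα_center]
    ring
  have hradius : α * discDKRadius K = discDKRadius ((K + K⁻¹) / 2) := by
    rw [discDKRadius_half_add_inv hK₀, hα_center]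
  refine ⟨hα_pos, ?_⟩
  calc (fun z : ℂ => (α : ℂ) * z - 1) '' discDK K
      = ball (α * discDKCenter K - 1 : ℂ) (‖(α : ℂ)‖ * discDKRadius K) :=
        image_smul_add_const_ball (Complex.ofReal_ne_zero.2 hα_pos.ne') (-1) _ _
    _ = ball ((α * discDKCenter K - 1 : ℝ) : ℂ) (α * discDKRadius K) := by
        rw [Complex.norm_of_nonneg hα_pos.le]
        push_cast
        rfl
    _ = discDK ((K + K⁻¹) / 2) := by rw [hcenter, hradius, discDK_eq_ball]
end
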